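/- For every positive function ψ on (0,∞) with ψ(t) → 0 as t → ∞, there exists a set Γ ⊆ ℕ such that Σ_{γ∈Γ} ψ(γ) < ∞ and the system E(ℕ∖Γ) = {e^{2πint} : n ∈ ℕ∖Γ} does not span L²(𝕋, w) for some nonnegative integrable weight w on (0,1) satisfying ∫₀¹ log w(t) dt = −∞. -/

import Mathlib

open MeasureTheory Filter

noncomputable section

/-- The weighted measure `w(t) dt` on `(0,1)`. -/
def wMeasure (w : ℝ → ℝ) : Measure ℝ :=
  (volume.restrict (Set.Ioo (0:ℝ) 1)).withDensity (fun t => ENNReal.ofReal (w t))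

/-- The exponential `e^{2πiλt}`. -/
def expf (l : ℝ) : ℝ → ℂ := fun t => Complex.exp (2 * Real.pi * Complex.I * l * t)

/-- Finite linear combinations of the exponentials `e^{2πiλt}`, `λ ∈ S`, are dense in
`L²([0,1], w(t)dt)`. -/
def ExpSpans (w : ℝ → ℝ) (S : Set ℝ) : Prop :=
  closure ((Submodule.span ℂ
      {g : Lp ℂ 2 (wMeasure w) | ∃ l ∈ S, (g : ℝ → ℂ) =ᵐ[wMeasure w] expf l} :
        Submodule ℂ (Lp ℂ 2 (wMeasure w))) : Set (Lp ℂ 2 (wMeasure w))) = Set.univ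

/-- `∫₀¹ log w(t) dt = -∞`: the positive part is finite and the negative part is infinite. -/
def LogIntNegInf (w : ℝ → ℝ) : Prop :=
  (∫⁻ t in Set.Ioo (0:ℝ) 1, ENNReal.ofReal (Real.log (w t))) ≠ ⊤ ∧
  (∫⁻ t in Set.Ioo (0:ℝ) 1, ENNReal.ofReal (-(Real.log (w t)))) = ⊤

/-!
The weight is a Riesz-type product `w = ∏ₖ pₖ(Mₖt)` of trigonometric polynomials `0 < pₖ ≤ 1`. Each
`pₖ` is so close to `1` in `L¹` that `w > 0` almost everywhere, while its dip near `t = 1/2` is deep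
enough that `∫ log pₖ ≤ -1`, whence `∫ log w = -∞`. The constant function `1` is orthogonal in
`L²(w)` to every `e^{2πint}` with `n` outside the spectrum of the product, and this spectrum is as
sparse as desired if the integers `Mₖ` grow fast enough.
-/

open scoped Pointwise

lemma expf_zero : expf 0 = 1 := by
  funext t
  simp [expf]

lemma expf_add (a b : ℝ) : expf (a + b) = expf a * expf b := by
  funext t
  simp only [expf, Pi.mul_apply, ← Complex.exp_add]
  congr 1
  push_cast
  ring

lemma expf_mul (a b t : ℝ) : expf a (b * t) = expf (b * a) t := by
  simp only [expf]
  congr 1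
  push_cast
  ring

lemma conj_expf (l t : ℝ) : starRingEnd ℂ (expf l t) = expf (-l) t := by
  simp [expf, ← Complex.exp_conj, Complex.conj_ofNat]

lemma norm_expf (l t : ℝ) : ‖expf l t‖ = 1 := by
  have h : 2 * Real.pi * Complex.I * l * t = ((2 * Real.pi * l * t : ℝ) : ℂ) * Complex.I := by
    push_cast
    ring
  rw [expf, h, Complex.norm_exp_ofReal_mul_I]

lemma continuous_expf (l : ℝ) : Continuous (expf l) := by
  unfold expf
  fun_prop

lemma expf_intCast_periodic (n : ℤ) : Function.Periodic (expf n) 1 := fun t ↦ by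
  have h : 2 * Real.pi * Complex.I * (n : ℝ) * ((t + 1 : ℝ) : ℂ) =
      2 * Real.pi * Complex.I * (n : ℝ) * t + n * (2 * Real.pi * Complex.I) := by
    push_cast
    ring
  rw [expf, h, Complex.exp_add, Complex.exp_int_mul_two_pi_mul_I, mul_one, expf]

lemma integral_expf_intCast {n : ℤ} (hn : n ≠ 0) : ∫ t in (0 : ℝ)..1, expf n t = 0 := by
  have hc : 2 * Real.pi * Complex.I * ((n : ℝ) : ℂ) ≠ 0 := by
    simp [Real.pi_ne_zero, hn]
  have hperiod := expf_intCast_periodic n 0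
  simp only [expf, zero_add] at hperiod ⊢
  rw [integral_exp_mul_complex hc, hperiod, sub_self, zero_div]

/-- The trigonometric polynomials `∑ cₙ e^{2πint}` with spectrum in `S`, as functions on `ℝ`. -/
def trigPoly (S : Set ℤ) : Submodule ℂ (ℝ → ℂ) :=
  Submodule.span ℂ ((fun n : ℤ ↦ expf n) '' S)

section TrigPoly

variable {S T : Set ℤ} {f g : ℝ → ℂ}

lemma expf_mem_trigPoly {n : ℤ} (hn : n ∈ S) : expf n ∈ trigPoly S :=
  Submodule.subset_span ⟨n, hn, rfl⟩

lemma one_mem_trigPoly (h0 : (0 : ℤ) ∈ S) : 1 ∈ trigPoly S := by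
  simpa [expf_zero] using expf_mem_trigPoly h0

lemma trigPoly_mono (h : S ⊆ T) : trigPoly S ≤ trigPoly T :=
  Submodule.span_mono (Set.image_mono h)

lemma mul_mem_trigPoly (hf : f ∈ trigPoly S) (hg : g ∈ trigPoly T) :
    f * g ∈ trigPoly (S + T) := by
  have hfg := Submodule.mul_mem_mul hf hg
  rw [trigPoly, trigPoly, Submodule.span_mul_span] at hfg
  refine Submodule.span_mono ?_ hfg
  rintro _ ⟨_, ⟨a, ha, rfl⟩, _, ⟨b, hb, rfl⟩, rfl⟩
  exact ⟨a + b, Set.add_mem_add ha hb, by simp [expf_add]⟩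

lemma comp_natCast_mul_mem_trigPoly (hf : f ∈ trigPoly S) (M : ℕ) :
    (fun t ↦ f (M * t)) ∈ trigPoly ((fun n : ℤ ↦ M * n) '' S) := by
  induction hf using Submodule.span_induction with
  | mem f hf =>
    obtain ⟨n, hn, rfl⟩ := hf
    convert expf_mem_trigPoly (Set.mem_image_of_mem (fun n : ℤ ↦ M * n) hn) using 1
    funext t
    simp [expf_mul]
  | zero => exact Submodule.zero_mem _
  | add f g _ _ hf hg => exact Submodule.add_mem _ hf hg
  | smul c f _ hf => exact Submodule.smul_mem _ c hf

lemma continuous_of_mem_trigPoly (hf : f ∈ trigPoly S) : Continuous f := by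
  induction hf using Submodule.span_induction with
  | mem f hf =>
    obtain ⟨n, -, rfl⟩ := hf
    exact continuous_expf n
  | zero => exact continuous_const
  | add f g _ _ hf hg => exact hf.add hg
  | smul c f _ hf => exact hf.const_smul c

lemma periodic_of_mem_trigPoly (hf : f ∈ trigPoly S) : Function.Periodic f 1 := by
  induction hf using Submodule.span_induction with
  | mem f hf =>
    obtain ⟨n, -, rfl⟩ := hf
    exact expf_intCast_periodic n
  | zero => exact fun _ ↦ rfl
  | add f g _ _ hf hg => exact hf.add hg
  | smul c f _ hf => exact hf.smul c

lemma integral_mul_expf_neg_eq_zero (hf : f ∈ trigPoly S) {n : ℤ} (hn : n ∉ S) :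
    ∫ t in (0 : ℝ)..1, f t * expf (-n) t = 0 := by
  induction hf using Submodule.span_induction with
  | mem f hf =>
    obtain ⟨m, hm, rfl⟩ := hf
    have hmn : m - n ≠ 0 := sub_ne_zero.2 fun h ↦ hn (h ▸ hm)
    simpa [sub_eq_add_neg, expf_add] using integral_expf_intCast hmn
  | zero => simp
  | add f g hfS hgS hf hg =>
    have hint {h : ℝ → ℂ} (hh : h ∈ trigPoly S) :
        IntervalIntegrable (fun t ↦ h t * expf (-n) t) volume 0 1 :=
      ((continuous_of_mem_trigPoly hh).mul (continuous_expf _)).intervalIntegrable _ _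
    simp only [Pi.add_apply, add_mul]
    rw [intervalIntegral.integral_add (hint hfS) (hint hgS), hf, hg, add_zero]
  | smul c f _ hf =>
    simp only [Pi.smul_apply, smul_eq_mul, mul_assoc]
    rw [intervalIntegral.integral_const_mul, hf, mul_zero]

lemma exists_finset_mem_trigPoly (hf : f ∈ trigPoly S) : ∃ s : Finset ℤ, f ∈ trigPoly s := by
  classical
  obtain ⟨F, hF, hfF⟩ := Submodule.mem_span_finite_of_mem_span hf
  obtain ⟨s, -, rfl⟩ := Finset.subset_set_image_iff.1 hF
  exact ⟨s, by rwa [Finset.coe_image] at hfF⟩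

end TrigPoly

/-- The algebra of all trigonometric polynomials of period `1`. -/
def trigPolyAlgebra : Subalgebra ℂ (ℝ → ℂ) :=
  (trigPoly Set.univ).toSubalgebra (one_mem_trigPoly (Set.mem_univ 0)) fun _ _ hf hg ↦
    trigPoly_mono (Set.subset_univ _) (mul_mem_trigPoly hf hg)

lemma sin_sq_mem_trigPolyAlgebra :
    (fun t : ℝ ↦ ((Real.sin (Real.pi * t) ^ 2 : ℝ) : ℂ)) ∈ trigPolyAlgebra := by
  have h : (fun t : ℝ ↦ ((Real.sin (Real.pi * t) ^ 2 : ℝ) : ℂ)) =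
      (1 / 2 : ℂ) • 1 + (-1 / 4 : ℂ) • (expf (1 : ℤ) + expf (-1 : ℤ)) := by
    funext t
    have hcos : Complex.cos (2 * (Real.pi * t)) = (expf (1 : ℤ) t + expf (-1 : ℤ) t) / 2 := by
      simp only [Complex.cos, expf]
      congr 3 <;> push_cast <;> ring_nf
    rw [Real.sin_sq_eq_half_sub]
    push_cast [hcos]
    simp only [Pi.add_apply, Pi.smul_apply, Pi.one_apply, smul_eq_mul]
    ring
  have hexp (n : ℤ) : expf n ∈ trigPolyAlgebra := expf_mem_trigPoly (Set.mem_univ n)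
  rw [h]
  exact add_mem (trigPolyAlgebra.smul_mem (one_mem _) _)
    (trigPolyAlgebra.smul_mem (add_mem (hexp 1) (hexp (-1))) _)

section Interval

variable {E : Type*} [NormedAddCommGroup E] [NormedSpace ℝ E]

lemma integral_comp_natCast_mul_of_periodic {f : ℝ → E} (hf : Function.Periodic f 1)
    (hfi : ∀ a b, IntervalIntegrable f volume a b) {M : ℕ} (hM : 0 < M) :
    ∫ t in (0 : ℝ)..1, f (M * t) = ∫ t in (0 : ℝ)..1, f t := by
  have hM0 : (M : ℝ) ≠ 0 := by positivity
  have hperiods : ∫ t in (0 : ℝ)..M, f t = (M : ℝ) • ∫ t in (0 : ℝ)..1, f t := by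
    simpa [Nat.cast_smul_eq_nsmul] using hf.intervalIntegral_add_zsmul_eq M 0 hfi
  rw [intervalIntegral.integral_comp_mul_left f hM0, mul_zero, mul_one, hperiods,
    inv_smul_smul₀ hM0]

lemma setIntegral_Ioo_eq_intervalIntegral {a b : ℝ} (hab : a ≤ b) (f : ℝ → E) :
    ∫ t in Set.Ioo a b, f t = ∫ t in a..b, f t := by
  rw [intervalIntegral.integral_of_le hab, integral_Ioc_eq_integral_Ioo]

lemma setLIntegral_Ioo_ofReal_eq {a b : ℝ} (hab : a ≤ b) {f : ℝ → ℝ}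
    (hf : IntervalIntegrable f volume a b) (hf0 : ∀ t, 0 ≤ f t) :
    ∫⁻ t in Set.Ioo a b, ENNReal.ofReal (f t) = ENNReal.ofReal (∫ t in a..b, f t) := by
  rw [← ofReal_integral_eq_lintegral_ofReal
    ((intervalIntegrable_iff_integrableOn_Ioo_of_le hab).1 hf) (.of_forall hf0),
    setIntegral_Ioo_eq_intervalIntegral hab]

end Interval

/-- A trigonometric polynomial `p` with spectrum in `s` and values in `(0, 1]` which differs from
`1` by at most `ε` in `L¹(0, 1)` and yet satisfies `∫₀¹ log p ≤ -1`. -/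
structure IsDip (s : Set ℤ) (ε : ℝ) (p : ℝ → ℝ) : Prop where
  mem_trigPoly : (fun t ↦ (p t : ℂ)) ∈ trigPoly s
  pos : ∀ t, 0 < p t
  le_one : ∀ t, p t ≤ 1
  integral_one_sub_le : ∫ t in (0 : ℝ)..1, (1 - p t) ≤ ε
  one_le_integral_neg_log : 1 ≤ ∫ t in (0 : ℝ)..1, -Real.log (p t)

namespace IsDip

variable {s : Set ℤ} {ε : ℝ} {p : ℝ → ℝ}

lemma continuous (hp : IsDip s ε p) : Continuous p :=
  Complex.continuous_re.comp (continuous_of_mem_trigPoly hp.mem_trigPoly)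

lemma periodic (hp : IsDip s ε p) : Function.Periodic p 1 := fun t ↦
  Complex.ofReal_injective (periodic_of_mem_trigPoly hp.mem_trigPoly t)

lemma continuous_log (hp : IsDip s ε p) : Continuous fun t ↦ Real.log (p t) :=
  hp.continuous.log fun t ↦ (hp.pos t).ne'

lemma comp_natCast_mul (hp : IsDip s ε p) {M : ℕ} (hM : 0 < M) :
    IsDip ((fun n : ℤ ↦ M * n) '' s) ε (fun t ↦ p (M * t)) where
  mem_trigPoly := comp_natCast_mul_mem_trigPoly hp.mem_trigPoly M
  pos t := hp.pos _
  le_one t := hp.le_one _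
  integral_one_sub_le := by
    have hper : Function.Periodic (fun t ↦ 1 - p t) 1 := fun t ↦ by simp only [hp.periodic t]
    rw [integral_comp_natCast_mul_of_periodic hper
      (fun _ _ ↦ (continuous_const.sub hp.continuous).intervalIntegrable _ _) hM]
    exact hp.integral_one_sub_le
  one_le_integral_neg_log := by
    have hper : Function.Periodic (fun t ↦ -Real.log (p t)) 1 := fun t ↦ by
      simp only [hp.periodic t]
    rw [integral_comp_natCast_mul_of_periodic hper
      (fun _ _ ↦ hp.continuous_log.neg.intervalIntegrable _ _) hM]
    exact hp.one_le_integral_neg_log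

lemma lintegral_one_sub_le (hp : IsDip s ε p) :
    ∫⁻ t in Set.Ioo (0 : ℝ) 1, ENNReal.ofReal (1 - p t) ≤ ENNReal.ofReal ε := by
  rw [setLIntegral_Ioo_ofReal_eq zero_le_one (f := fun t ↦ 1 - p t)
    ((continuous_const.sub hp.continuous).intervalIntegrable _ _)
    fun t ↦ sub_nonneg.2 (hp.le_one t)]
  exact ENNReal.ofReal_le_ofReal hp.integral_one_sub_le

lemma one_le_lintegral_neg_log (hp : IsDip s ε p) :
    1 ≤ ∫⁻ t in Set.Ioo (0 : ℝ) 1, ENNReal.ofReal (-Real.log (p t)) := by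
  rw [setLIntegral_Ioo_ofReal_eq zero_le_one (f := fun t ↦ -Real.log (p t))
    (hp.continuous_log.neg.intervalIntegrable _ _)
    fun t ↦ neg_nonneg.2 (Real.log_nonpos (hp.pos t).le (hp.le_one t))]
  exact ENNReal.one_le_ofReal.2 hp.one_le_integral_neg_log

end IsDip

/-- The bump `sin²ⁿ(πt)`, of height `1` at `t = 1/2` and width about `n^{-1/2}`. -/
def sinBump (n : ℕ) (t : ℝ) : ℝ := (Real.sin (Real.pi * t) ^ 2) ^ n

/-- The polynomial `(1 - sin²ⁿ(πt)/2)⁴ⁿ`. The exponent makes its logarithm at most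
`-2n sin²ⁿ(πt)`, whose integral is of order `-n^{1/2}`. -/
def sinDip (n : ℕ) (t : ℝ) : ℝ := (1 - sinBump n t / 2) ^ (4 * n)

section SinDip

variable (n : ℕ) (t : ℝ)

lemma sinBump_nonneg : 0 ≤ sinBump n t := by
  unfold sinBump
  positivity

lemma sinBump_le_one : sinBump n t ≤ 1 :=
  pow_le_one₀ (sq_nonneg _) (Real.sin_sq_le_one _)

lemma continuous_sinBump : Continuous (sinBump n) := by
  unfold sinBump
  fun_prop

lemma continuous_sinDip : Continuous (sinDip n) := by
  unfold sinDip
  have := continuous_sinBump n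
  fun_prop

lemma sinDip_pos : 0 < sinDip n t :=
  pow_pos (by linarith [sinBump_le_one n t]) _

lemma sinDip_le_one : sinDip n t ≤ 1 :=
  pow_le_one₀ (by linarith [sinBump_le_one n t]) (by linarith [sinBump_nonneg n t])

lemma two_mul_sinBump_le_neg_log_sinDip : 2 * n * sinBump n t ≤ -Real.log (sinDip n t) := by
  have hlog := Real.log_le_sub_one_of_pos (x := 1 - sinBump n t / 2)
    (by linarith [sinBump_le_one n t])
  rw [sinDip, Real.log_pow]
  push_cast
  nlinarith [(Nat.cast_nonneg n : (0 : ℝ) ≤ n)]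

lemma one_sub_sinDip_le : 1 - sinDip n t ≤ 2 * n * sinBump n t := by
  have hbernoulli := one_add_mul_le_pow (a := -(sinBump n t / 2))
    (by linarith [sinBump_le_one n t]) (4 * n)
  rw [← sub_eq_add_neg] at hbernoulli
  rw [sinDip]
  push_cast at hbernoulli
  linarith

lemma sinDip_mem_trigPolyAlgebra : (fun t ↦ (sinDip n t : ℂ)) ∈ trigPolyAlgebra := by
  have h : (fun t ↦ (sinDip n t : ℂ)) =
      (1 - (1 / 2 : ℂ) • (fun t : ℝ ↦ ((Real.sin (Real.pi * t) ^ 2 : ℝ) : ℂ)) ^ n) ^ (4 * n) := by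
    funext t
    simp only [sinDip, sinBump, Pi.sub_apply, Pi.smul_apply, Pi.one_apply, smul_eq_mul,
      Pi.pow_apply]
    push_cast
    ring
  rw [h]
  exact pow_mem (sub_mem (one_mem _)
    (trigPolyAlgebra.smul_mem (pow_mem sin_sq_mem_trigPolyAlgebra n) _)) _

lemma one_le_two_mul_mul_wallis_prod :
    1 ≤ 2 * (n + 1) * ∏ i ∈ Finset.range (n + 1), ((2 * i + 1) / (2 * i + 2) : ℝ) := by
  induction n with
  | zero => norm_num
  | succ n ih =>
    rw [Finset.prod_range_succ]
    set W := ∏ i ∈ Finset.range (n + 1), ((2 * i + 1) / (2 * i + 2) : ℝ)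
    have hW : 0 ≤ W := Finset.prod_nonneg fun i _ ↦ by positivity
    calc 1 ≤ 2 * (n + 1) * W := ih
      _ ≤ (2 * (n + 1) + 1) * W := mul_le_mul_of_nonneg_right (by linarith) hW
      _ = _ := by push_cast; field_simp

lemma one_le_two_mul_integral_sinBump :
    1 ≤ 2 * ((n + 1 : ℕ) : ℝ) * ∫ t in (0 : ℝ)..1, sinBump (n + 1) t := by
  have hscale := intervalIntegral.integral_comp_mul_left (a := 0) (b := 1)
    (fun x ↦ Real.sin x ^ (2 * (n + 1))) Real.pi_ne_zero
  rw [mul_zero, mul_one, integral_sin_pow_even, smul_eq_mul,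
    inv_mul_cancel_left₀ Real.pi_ne_zero] at hscale
  simp only [sinBump, ← pow_mul]
  rw [hscale]
  exact_mod_cast one_le_two_mul_mul_wallis_prod n

lemma sin_pi_mul_sq_lt_one {t : ℝ} (ht : t ∈ Set.Ioo (0 : ℝ) 1) (ht2 : t ≠ 1 / 2) :
    Real.sin (Real.pi * t) ^ 2 < 1 := by
  have hcos : Real.cos (Real.pi * t) ≠ 0 := by
    rcases lt_or_gt_of_ne ht2 with h | h
    · exact (Real.cos_pos_of_mem_Ioo ⟨by nlinarith [Real.pi_pos, ht.1],
        by nlinarith [Real.pi_pos]⟩).ne'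
    · exact (Real.cos_neg_of_pi_div_two_lt_of_lt (by nlinarith [Real.pi_pos])
        (by nlinarith [Real.pi_pos, ht.2])).ne
  have := Real.sin_sq_add_cos_sq (Real.pi * t)
  have := sq_pos_of_ne_zero hcos
  linarith

lemma tendsto_two_mul_sinBump {t : ℝ} (ht : t ∈ Set.Ioo (0 : ℝ) 1) (ht2 : t ≠ 1 / 2) :
    Tendsto (fun n ↦ 2 * n * sinBump n t) atTop (nhds 0) := by
  have hpow := tendsto_self_mul_const_pow_of_lt_one (sq_nonneg _) (sin_pi_mul_sq_lt_one ht ht2)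
  simpa only [sinBump, mul_zero, mul_assoc] using hpow.const_mul 2

lemma tendsto_integral_one_sub_sinDip :
    Tendsto (fun n ↦ ∫ t in (0 : ℝ)..1, (1 - sinDip n t)) atTop (nhds 0) := by
  simp only [← setIntegral_Ioo_eq_intervalIntegral (zero_le_one' ℝ)]
  suffices Tendsto (fun n ↦ ∫ t in Set.Ioo (0 : ℝ) 1, (1 - sinDip n t)) atTop
      (nhds (∫ _ in Set.Ioo (0 : ℝ) 1, (0 : ℝ))) by rwa [integral_zero] at this
  refine tendsto_integral_of_dominated_convergence (fun _ ↦ 1)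
    (fun n ↦ (continuous_const.sub (continuous_sinDip n)).aestronglyMeasurable)
    (integrable_const _) (fun n ↦ .of_forall fun t ↦ ?_) ?_
  · rw [Real.norm_eq_abs, abs_le]
    constructor <;> linarith [sinDip_pos n t, sinDip_le_one n t]
  · have hne : ∀ᵐ t ∂(volume.restrict (Set.Ioo (0 : ℝ) 1)), t ≠ 1 / 2 :=
      Measure.ae_ne _ _
    filter_upwards [ae_restrict_mem measurableSet_Ioo, hne] with t ht ht2
    exact squeeze_zero (fun n ↦ sub_nonneg.2 (sinDip_le_one n t))
      (fun n ↦ one_sub_sinDip_le n t) (tendsto_two_mul_sinBump ht ht2)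

end SinDip

lemma exists_isDip {ε : ℝ} (hε : 0 < ε) : ∃ (s : Finset ℤ) (p : ℝ → ℝ), IsDip s ε p := by
  obtain ⟨n, hn, hsmall⟩ := ((eventually_gt_atTop 0).and
    (tendsto_integral_one_sub_sinDip.eventually_le_const hε)).exists
  obtain ⟨m, rfl⟩ := Nat.exists_eq_succ_of_ne_zero hn.ne'
  obtain ⟨s, hs⟩ := exists_finset_mem_trigPoly (sinDip_mem_trigPolyAlgebra (m + 1))
  refine ⟨s, sinDip (m + 1), hs, sinDip_pos _, sinDip_le_one _, hsmall, ?_⟩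
  have hlog : Continuous fun t ↦ -Real.log (sinDip (m + 1) t) :=
    ((continuous_sinDip _).log fun t ↦ (sinDip_pos _ t).ne').neg
  calc 1 ≤ ∫ t in (0 : ℝ)..1, 2 * ((m + 1 : ℕ) : ℝ) * sinBump (m + 1) t := by
        rw [intervalIntegral.integral_const_mul]
        exact one_le_two_mul_integral_sinBump m
    _ ≤ _ := intervalIntegral.integral_mono zero_le_one
        ((continuous_const.mul (continuous_sinBump _)).intervalIntegrable _ _)
        (hlog.intervalIntegrable _ _) (two_mul_sinBump_le_neg_log_sinDip _)

/-- The infinite product `∏ₖ pₖ` of functions with values in `[0, 1]`, written as the infimum of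
the partial products so that no convergence has to be assumed. -/
def infProd {X : Type*} (p : ℕ → X → ℝ) (x : X) : ℝ := ⨅ K, ∏ k ∈ Finset.range K, p k x

section InfProd

variable {X : Type*} {p : ℕ → X → ℝ} {x : X}

lemma infProd_nonneg (h0 : ∀ k, 0 ≤ p k x) : 0 ≤ infProd p x :=
  Real.iInf_nonneg fun _ ↦ Finset.prod_nonneg fun k _ ↦ h0 k

lemma bddBelow_range_partialProd (h0 : ∀ k, 0 ≤ p k x) :
    BddBelow (Set.range fun K ↦ ∏ k ∈ Finset.range K, p k x) :=
  ⟨0, Set.forall_mem_range.2 fun _ ↦ Finset.prod_nonneg fun k _ ↦ h0 k⟩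

lemma infProd_le_prod (h0 : ∀ k, 0 ≤ p k x) (K : ℕ) :
    infProd p x ≤ ∏ k ∈ Finset.range K, p k x :=
  ciInf_le (bddBelow_range_partialProd h0) K

lemma infProd_le_one (h0 : ∀ k, 0 ≤ p k x) : infProd p x ≤ 1 := by
  simpa using infProd_le_prod h0 0

lemma tendsto_prod_infProd (h0 : ∀ k, 0 ≤ p k x) (h1 : ∀ k, p k x ≤ 1) :
    Tendsto (fun K ↦ ∏ k ∈ Finset.range K, p k x) atTop (nhds (infProd p x)) := by
  refine tendsto_atTop_ciInf (antitone_nat_of_succ_le fun K ↦ ?_) (bddBelow_range_partialProd h0)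
  rw [Finset.prod_range_succ]
  exact mul_le_of_le_one_right (Finset.prod_nonneg fun k _ ↦ h0 k) (h1 K)

lemma infProd_pos (h0 : ∀ k, 0 < p k x) (h1 : ∀ k, p k x ≤ 1)
    (hs : Summable fun k ↦ 1 - p k x) : 0 < infProd p x := by
  have hlog : Summable fun k ↦ Real.log (p k x) := by
    simpa using Real.summable_log_one_add_of_summable hs.neg
  have hprod := (Real.hasProd_of_hasSum_log h0 hlog.hasSum).tendsto_prod_nat
  rw [tendsto_nhds_unique (tendsto_prod_infProd (fun k ↦ (h0 k).le) h1) hprod]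
  exact Real.exp_pos _

lemma tsum_neg_log_le_neg_log_infProd (h0 : ∀ k, 0 < p k x) (h1 : ∀ k, p k x ≤ 1)
    (hpos : 0 < infProd p x) :
    ∑' k, ENNReal.ofReal (-Real.log (p k x)) ≤ ENNReal.ofReal (-Real.log (infProd p x)) := by
  refine ENNReal.tsum_le_of_sum_range_le fun K ↦ ?_
  rw [← ENNReal.ofReal_sum_of_nonneg fun k _ ↦ neg_nonneg.2 (Real.log_nonpos (h0 k).le (h1 k)),
    Finset.sum_neg_distrib, ← Real.log_prod fun k _ ↦ (h0 k).ne']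
  gcongr
  exact infProd_le_prod (fun k ↦ (h0 k).le) K

variable [MeasurableSpace X] {μ : Measure X}

lemma measurable_infProd (hp : ∀ k, Measurable (p k)) : Measurable (infProd p) :=
  Measurable.iInf fun K ↦ Finset.measurable_fun_prod (Finset.range K) fun k _ ↦ hp k

lemma ae_infProd_pos (hp : ∀ k, Measurable (p k)) (h0 : ∀ k x, 0 < p k x)
    (h1 : ∀ k x, p k x ≤ 1) (hs : ∑' k, ∫⁻ x, ENNReal.ofReal (1 - p k x) ∂μ ≠ ⊤) :
    ∀ᵐ x ∂μ, 0 < infProd p x := by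
  have hmeas (k : ℕ) : AEMeasurable (fun x ↦ ENNReal.ofReal (1 - p k x)) μ :=
    ((hp k).const_sub 1).ennreal_ofReal.aemeasurable
  rw [← lintegral_tsum hmeas] at hs
  filter_upwards [ae_lt_top' (AEMeasurable.tsum hmeas) hs] with x hx
  refine infProd_pos (h0 · x) (h1 · x) ((ENNReal.summable_toReal hx.ne).congr fun k ↦ ?_)
  exact ENNReal.toReal_ofReal (sub_nonneg.2 (h1 k x))

lemma lintegral_neg_log_infProd_eq_top (hp : ∀ k, Measurable (p k)) (h0 : ∀ k x, 0 < p k x)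
    (h1 : ∀ k x, p k x ≤ 1) (hpos : ∀ᵐ x ∂μ, 0 < infProd p x)
    (hlog : ∀ k, 1 ≤ ∫⁻ x, ENNReal.ofReal (-Real.log (p k x)) ∂μ) :
    ∫⁻ x, ENNReal.ofReal (-Real.log (infProd p x)) ∂μ = ⊤ := by
  have hmeas (k : ℕ) : AEMeasurable (fun x ↦ ENNReal.ofReal (-Real.log (p k x))) μ :=
    (hp k).log.neg.ennreal_ofReal.aemeasurable
  refine top_unique ?_
  calc ⊤ = ∑' _ : ℕ, (1 : ENNReal) := (ENNReal.tsum_const_eq_top_of_ne_zero one_ne_zero).symm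
    _ ≤ ∑' k, ∫⁻ x, ENNReal.ofReal (-Real.log (p k x)) ∂μ := ENNReal.tsum_le_tsum hlog
    _ = ∫⁻ x, ∑' k, ENNReal.ofReal (-Real.log (p k x)) ∂μ := (lintegral_tsum hmeas).symm
    _ ≤ ∫⁻ x, ENNReal.ofReal (-Real.log (infProd p x)) ∂μ := lintegral_mono_ae <| by
      filter_upwards [hpos] with x hx
      exact tsum_neg_log_le_neg_log_infProd (h0 · x) (h1 · x) hx

end InfProd

section SparseSpectrum

variable {φ : ℤ → ℝ}

lemma tendsto_sum_dilate_erase_zero (hφ : Tendsto φ cofinite (nhds 0)) (D s : Finset ℤ) :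
    Tendsto (fun M : ℕ ↦ ∑ x ∈ D ×ˢ s.erase 0, φ (x.1 + M * x.2)) atTop (nhds 0) := by
  have hterm : ∀ x ∈ D ×ˢ s.erase 0, Tendsto (fun M : ℕ ↦ φ (x.1 + M * x.2)) atTop (nhds 0) := by
    intro x hx
    have hx2 : x.2 ≠ 0 := Finset.ne_of_mem_erase (Finset.mem_product.1 hx).2
    have hinj : Function.Injective fun M : ℕ ↦ x.1 + M * x.2 := fun a b hab ↦ by
      simpa [hx2] using hab
    exact hφ.comp (Nat.cofinite_eq_atTop ▸ hinj.tendsto_cofinite)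
  simpa only [Finset.sum_const_zero] using tendsto_finsetSum _ hterm

lemma sum_union_add_dilate_le (hφ0 : ∀ n, 0 ≤ φ n) (D s : Finset ℤ) (M : ℕ) :
    ∑ n ∈ D ∪ (D + s.image fun n : ℤ ↦ M * n), φ n ≤
      ∑ n ∈ D, φ n + ∑ x ∈ D ×ˢ s.erase 0, φ (x.1 + M * x.2) := by
  have hsub : D ∪ (D + s.image fun n : ℤ ↦ M * n) ⊆
      D ∪ (D ×ˢ s.erase 0).image fun x : ℤ × ℤ ↦ x.1 + M * x.2 := by
    refine Finset.union_subset Finset.subset_union_left fun n hn ↦ ?_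
    obtain ⟨a, ha, _, hjs, rfl⟩ := Finset.mem_add.1 hn
    obtain ⟨j, hj, rfl⟩ := Finset.mem_image.1 hjs
    rcases eq_or_ne j 0 with rfl | hj0
    · simp [ha]
    · exact Finset.mem_union_right _ (Finset.mem_image.2 ⟨(a, j), by simp [ha, hj, hj0], rfl⟩)
  calc ∑ n ∈ D ∪ (D + s.image fun n : ℤ ↦ M * n), φ n
      ≤ ∑ n ∈ D ∪ (D ×ˢ s.erase 0).image fun x : ℤ × ℤ ↦ x.1 + M * x.2, φ n :=
        Finset.sum_le_sum_of_subset_of_nonneg hsub fun n _ _ ↦ hφ0 n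
    _ ≤ ∑ n ∈ D, φ n + ∑ n ∈ (D ×ˢ s.erase 0).image fun x : ℤ × ℤ ↦ x.1 + M * x.2, φ n := by
        rw [← Finset.sum_union_inter]
        exact le_add_of_nonneg_right (Finset.sum_nonneg fun n _ ↦ hφ0 n)
    _ ≤ _ := by
        gcongr
        exact Finset.sum_image_le_of_nonneg fun _ _ ↦ hφ0 _

lemma exists_sum_union_add_dilate_le (hφ0 : ∀ n, 0 ≤ φ n) (hφ : Tendsto φ cofinite (nhds 0))
    (D s : Finset ℤ) {ε : ℝ} (hε : 0 < ε) :
    ∃ M : ℕ, 0 < M ∧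
      ∑ n ∈ D ∪ (D + s.image fun n : ℤ ↦ M * n), φ n ≤ ∑ n ∈ D, φ n + ε := by
  obtain ⟨M, hM, hsmall⟩ := ((eventually_gt_atTop 0).and
    ((tendsto_sum_dilate_erase_zero hφ D s).eventually_le_const hε)).exists
  exact ⟨M, hM, (sum_union_add_dilate_le hφ0 D s M).trans (by gcongr)⟩

lemma summable_iUnion_of_sum_le {ι : Type*} {φ : ι → ℝ} (hφ0 : ∀ i, 0 ≤ φ i)
    {D : ℕ → Finset ι} (hD : Monotone D) {c : ℝ} (hc : ∀ k, ∑ i ∈ D k, φ i ≤ c) :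
    Summable fun i : ⋃ k, (D k : Set ι) ↦ φ i := by
  refine summable_of_sum_le (fun i ↦ hφ0 i) (c := c) fun u ↦ ?_
  have hu : (u.map (Function.Embedding.subtype _) : Set ι) ⊆ ⋃ k, (D k : Set ι) := by
    intro i hi
    obtain ⟨j, -, rfl⟩ := Finset.mem_map.1 hi
    exact j.2
  have hdir : Directed (· ⊆ ·) fun k ↦ (D k : Set ι) :=
    Monotone.directed_le fun _ _ hkl ↦ Finset.coe_subset.2 (hD hkl)
  obtain ⟨K, hK⟩ := hdir.exists_mem_subset_of_finset_subset_biUnion hu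
  calc ∑ i ∈ u, φ i = ∑ i ∈ u.map (Function.Embedding.subtype _), φ i := by
        rw [Finset.sum_map]
        rfl
    _ ≤ ∑ i ∈ D K, φ i := Finset.sum_le_sum_of_subset_of_nonneg (Finset.coe_subset.1 hK)
        fun i _ _ ↦ hφ0 i
    _ ≤ c := hc K

lemma exists_dilations_summable_iUnion (hφ : Tendsto φ cofinite (nhds 0)) (s : ℕ → Finset ℤ) :
    ∃ (M : ℕ → ℕ) (D : ℕ → Finset ℤ), (∀ k, 0 < M k) ∧ 0 ∈ D 0 ∧
      (∀ k, D k + (s k).image (fun n : ℤ ↦ M k * n) ⊆ D (k + 1)) ∧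
      Summable fun n : ⋃ k, (D k : Set ℤ) ↦ φ n := by
  have habs : Tendsto (fun n ↦ |φ n|) cofinite (nhds 0) := by simpa using hφ.abs
  choose M hM hsum using fun (D : Finset ℤ) (k : ℕ) ↦
    exists_sum_union_add_dilate_le (fun n ↦ abs_nonneg (φ n)) habs D (s k)
      (show (0 : ℝ) < (1 / 2) ^ k by positivity)
  let D (k : ℕ) : Finset ℤ :=
    Nat.rec {0} (fun k D ↦ D ∪ (D + (s k).image fun n : ℤ ↦ M D k * n)) k
  have hbound (k : ℕ) : ∑ n ∈ D k, |φ n| ≤ |φ 0| + 2 := by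
    have hgeom : ∑ n ∈ D k, |φ n| ≤ |φ 0| + ∑ i ∈ Finset.range k, (1 / 2 : ℝ) ^ i := by
      induction k with
      | zero => simp [D]
      | succ k ih =>
        rw [Finset.sum_range_succ]
        linarith [hsum (D k) k]
    linarith [sum_geometric_two_le k]
  refine ⟨fun k ↦ M (D k) k, D, fun k ↦ hM _ _, Finset.mem_singleton_self 0,
    fun k ↦ Finset.subset_union_right, .of_abs ?_⟩
  exact summable_iUnion_of_sum_le (fun n ↦ abs_nonneg (φ n))
    (monotone_nat_of_le_succ fun k ↦ Finset.subset_union_left) hbound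

end SparseSpectrum

lemma prod_mem_trigPoly {p : ℕ → ℝ → ℝ} {s D : ℕ → Set ℤ}
    (hp : ∀ k, (fun t ↦ (p k t : ℂ)) ∈ trigPoly (s k)) (hD0 : 0 ∈ D 0)
    (hD : ∀ k, D k + s k ⊆ D (k + 1)) (K : ℕ) :
    (fun t ↦ ((∏ k ∈ Finset.range K, p k t : ℝ) : ℂ)) ∈ trigPoly (D K) := by
  induction K with
  | zero => simpa [Pi.one_def] using one_mem_trigPoly hD0
  | succ K ih =>
    convert trigPoly_mono (hD K) (mul_mem_trigPoly ih (hp K)) using 1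
    funext t
    simp [Finset.prod_range_succ]

lemma integral_infProd_mul_expf_neg_eq_zero {p : ℕ → ℝ → ℝ} (h0 : ∀ k t, 0 ≤ p k t)
    (h1 : ∀ k t, p k t ≤ 1) {D : ℕ → Set ℤ}
    (hD : ∀ K, (fun t ↦ ((∏ k ∈ Finset.range K, p k t : ℝ) : ℂ)) ∈ trigPoly (D K))
    {n : ℤ} (hn : ∀ K, n ∉ D K) :
    ∫ t in Set.Ioo (0 : ℝ) 1, (infProd p t : ℂ) * expf (-n) t = 0 := by
  have hlim : Tendsto (fun K ↦ ∫ t in Set.Ioo (0 : ℝ) 1,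
      ((∏ k ∈ Finset.range K, p k t : ℝ) : ℂ) * expf (-n) t) atTop
      (nhds (∫ t in Set.Ioo (0 : ℝ) 1, (infProd p t : ℂ) * expf (-n) t)) := by
    refine tendsto_integral_of_dominated_convergence (fun _ ↦ 1) (fun K ↦ ?_)
      (integrable_const _) (fun K ↦ .of_forall fun t ↦ ?_) (.of_forall fun t ↦ ?_)
    · exact ((continuous_of_mem_trigPoly (hD K)).mul (continuous_expf _)).aestronglyMeasurable
    · rw [norm_mul, norm_expf, mul_one, Complex.norm_real,
        Real.norm_of_nonneg (Finset.prod_nonneg fun k _ ↦ h0 k t)]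
      exact Finset.prod_le_one (fun k _ ↦ h0 k t) fun k _ ↦ h1 k t
    · exact ((Complex.continuous_ofReal.tendsto _).comp
        (tendsto_prod_infProd (h0 · t) (h1 · t))).mul_const _
  simp only [setIntegral_Ioo_eq_intervalIntegral (zero_le_one' ℝ)] at hlim ⊢
  simp only [integral_mul_expf_neg_eq_zero (hD _) (hn _)] at hlim
  exact tendsto_nhds_unique hlim tendsto_const_nhds

section Weight

variable {w : ℝ → ℝ} {S T : Set ℝ}

lemma integral_wMeasure (hw : Measurable w) (hw0 : ∀ t, 0 ≤ w t) (f : ℝ → ℂ) :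
    ∫ t, f t ∂(wMeasure w) = ∫ t in Set.Ioo (0 : ℝ) 1, (w t : ℂ) * f t := by
  rw [wMeasure, integral_withDensity_eq_integral_toReal_smul hw.ennreal_ofReal
    (.of_forall fun t ↦ ENNReal.ofReal_lt_top)]
  simp only [ENNReal.toReal_ofReal (hw0 _), Complex.real_smul]

lemma wMeasure_ne_zero (hw : Measurable w)
    (hpos : ∀ᵐ t ∂(volume.restrict (Set.Ioo (0 : ℝ) 1)), 0 < w t) : wMeasure w ≠ 0 := by
  intro h
  rw [wMeasure, withDensity_eq_zero_iff hw.ennreal_ofReal.aemeasurable] at h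
  have hfalse : ∀ᵐ _ ∂(volume.restrict (Set.Ioo (0 : ℝ) 1)), False := by
    filter_upwards [h, hpos] with t hle hlt
    exact hlt.not_ge (ENNReal.ofReal_eq_zero.1 hle)
  rw [ae_iff] at hfalse
  simp at hfalse

lemma ExpSpans.mono (hST : S ⊆ T) (hS : ExpSpans w S) : ExpSpans w T :=
  Set.univ_subset_iff.1 <| hS ▸ closure_mono (Submodule.span_mono
    fun _ ⟨l, hl, hg⟩ ↦ ⟨l, hST hl, hg⟩)

lemma not_expSpans_of_integral_expf_neg_eq_zero [IsFiniteMeasure (wMeasure w)]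
    (hw : wMeasure w ≠ 0) (hS : ∀ l ∈ S, ∫ t, expf (-l) t ∂(wMeasure w) = 0) :
    ¬ ExpSpans w S := by
  intro hspan
  have : NeZero (wMeasure w) := ⟨hw⟩
  set c : Lp ℂ 2 (wMeasure w) := Lp.const 2 (wMeasure w) 1
  have hc : c ≠ 0 := by
    rw [← norm_pos_iff, Lp.norm_const _ _ _ two_ne_zero, norm_one, one_mul]
    exact Real.rpow_pos_of_pos measureReal_univ_pos _
  rw [ExpSpans, ← Submodule.topologicalClosure_coe, Submodule.coe_eq_univ,
    Submodule.topologicalClosure_eq_top_iff] at hspan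
  refine hc ((Submodule.eq_bot_iff _).1 hspan c ?_)
  rw [Submodule.mem_orthogonal]
  intro u hu
  induction hu using Submodule.span_induction with
  | mem g hg =>
    obtain ⟨l, hl, hgl⟩ := hg
    rw [L2.inner_def, ← hS l hl]
    refine integral_congr_ae ?_
    filter_upwards [hgl] with t hgt
    simp [c, hgt, conj_expf]
  | zero => exact inner_zero_left _
  | add u v _ _ hu hv => rw [inner_add_left, hu, hv, add_zero]
  | smul a u _ hu => rw [inner_smul_left, hu, mul_zero]

end Weight

lemma logIntNegInf_infProd {p : ℕ → ℝ → ℝ} (hp : ∀ k, Measurable (p k)) (h0 : ∀ k t, 0 < p k t)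
    (h1 : ∀ k t, p k t ≤ 1) (hpos : ∀ᵐ t ∂(volume.restrict (Set.Ioo (0 : ℝ) 1)), 0 < infProd p t)
    (hlog : ∀ k, 1 ≤ ∫⁻ t in Set.Ioo (0 : ℝ) 1, ENNReal.ofReal (-Real.log (p k t))) :
    LogIntNegInf (infProd p) := by
  have hlog_nonpos (t : ℝ) : Real.log (infProd p t) ≤ 0 :=
    Real.log_nonpos (infProd_nonneg fun k ↦ (h0 k t).le) (infProd_le_one fun k ↦ (h0 k t).le)
  refine ⟨?_, lintegral_neg_log_infProd_eq_top hp h0 h1 hpos hlog⟩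
  simp only [ENNReal.ofReal_of_nonpos (hlog_nonpos _), lintegral_zero]
  exact ENNReal.zero_ne_top

lemma integrableOn_infProd {p : ℕ → ℝ → ℝ} (hp : ∀ k, Measurable (p k)) (h0 : ∀ k t, 0 ≤ p k t)
    {A : Set ℝ} (hA : volume A ≠ ⊤) : IntegrableOn (infProd p) A := by
  refine Measure.integrableOn_of_bounded (M := 1) hA (measurable_infProd hp).aestronglyMeasurable
    (.of_forall fun t ↦ ?_)
  rw [Real.norm_of_nonneg (infProd_nonneg (h0 · t))]
  exact infProd_le_one (h0 · t)

lemma not_expSpans_infProd {p : ℕ → ℝ → ℝ} (hp : ∀ k, Measurable (p k)) (h0 : ∀ k t, 0 ≤ p k t)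
    (h1 : ∀ k t, p k t ≤ 1) (hpos : ∀ᵐ t ∂(volume.restrict (Set.Ioo (0 : ℝ) 1)), 0 < infProd p t)
    {D : ℕ → Set ℤ}
    (hD : ∀ K, (fun t ↦ ((∏ k ∈ Finset.range K, p k t : ℝ) : ℂ)) ∈ trigPoly (D K)) :
    ¬ ExpSpans (infProd p) {x | ∃ n : ℤ, n ∉ ⋃ k, D k ∧ x = n} := by
  have hw := measurable_infProd hp
  have : IsFiniteMeasure (wMeasure (infProd p)) := isFiniteMeasure_withDensity_ofReal
    (integrableOn_infProd hp h0 measure_Ioo_lt_top.ne).2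
  refine not_expSpans_of_integral_expf_neg_eq_zero (wMeasure_ne_zero hw hpos) ?_
  rintro _ ⟨n, hn, rfl⟩
  rw [integral_wMeasure hw fun t ↦ infProd_nonneg (h0 · t)]
  exact integral_infProd_mul_expf_neg_eq_zero h0 h1 hD fun K hK ↦ hn (Set.mem_iUnion_of_mem K hK)

theorem sparse_gamma_not_complete_general (φ : ℤ → ℝ) (hφ : Tendsto φ cofinite (nhds 0)) :
    ∃ Λ : Set ℤ, Summable (fun n : Λ ↦ φ n) ∧
      ∃ w : ℝ → ℝ, (∀ t ∈ Set.Ioo (0 : ℝ) 1, 0 ≤ w t) ∧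
        IntegrableOn w (Set.Ioo (0 : ℝ) 1) ∧ LogIntNegInf w ∧
        ¬ ExpSpans w {x : ℝ | ∃ n : ℤ, n ∉ Λ ∧ x = n} := by
  choose s p hp using fun k : ℕ ↦ exists_isDip (ε := (1 / 2) ^ k) (by positivity)
  obtain ⟨M, D, hM, hD0, hD, hsum⟩ := exists_dilations_summable_iUnion hφ s
  let q (k : ℕ) (t : ℝ) : ℝ := p k (M k * t)
  have hq (k : ℕ) : IsDip _ _ (q k) := (hp k).comp_natCast_mul (hM k)
  have hmeas (k : ℕ) : Measurable (q k) := (hq k).continuous.measurable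
  have hq0 (k : ℕ) (t : ℝ) : 0 ≤ q k t := ((hq k).pos t).le
  have hpos : ∀ᵐ t ∂(volume.restrict (Set.Ioo (0 : ℝ) 1)), 0 < infProd q t :=
    ae_infProd_pos hmeas (fun k ↦ (hq k).pos) (fun k ↦ (hq k).le_one) <| ne_top_of_le_ne_top
      summable_geometric_two.tsum_ofReal_ne_top
      (ENNReal.tsum_le_tsum fun k ↦ (hq k).lintegral_one_sub_le)
  have hspectrum := prod_mem_trigPoly (D := fun k ↦ D k) (fun k ↦ (hq k).mem_trigPoly) hD0
    fun k ↦ by exact_mod_cast hD k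
  exact ⟨⋃ k, D k, hsum, infProd q, fun t _ ↦ infProd_nonneg (hq0 · t),
    integrableOn_infProd hmeas hq0 measure_Ioo_lt_top.ne,
    logIntNegInf_infProd hmeas (fun k ↦ (hq k).pos) (fun k ↦ (hq k).le_one) hpos
      fun k ↦ (hq k).one_le_lintegral_neg_log,
    not_expSpans_infProd hmeas hq0 (fun k ↦ (hq k).le_one) hpos hspectrum⟩

/-- For every positive `ψ` with `ψ(t) → 0` as `t → ∞` there is `Γ ⊆ ℕ` with
`∑_{γ∈Γ} ψ(γ) < ∞` such that `E(ℕ∖Γ)` does not span `L²(𝕋,w)` for some nonnegative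
integrable weight `w` on `(0,1)` with `∫₀¹ log w = -∞`. -/
theorem sparse_gamma_not_complete (ψ : ℝ → ℝ)
    (hψpos : ∀ t : ℝ, 0 < t → 0 < ψ t)
    (hψ0 : Tendsto ψ atTop (nhds 0)) :
    ∃ Γ : Set ℕ, 0 ∉ Γ ∧ Summable (fun γ : Γ => ψ (γ : ℝ)) ∧
      ∃ w : ℝ → ℝ, (∀ t ∈ Set.Ioo (0:ℝ) 1, 0 ≤ w t) ∧
        IntegrableOn w (Set.Ioo (0:ℝ) 1) ∧ LogIntNegInf w ∧
        ¬ ExpSpans w {x : ℝ | ∃ n : ℕ, 1 ≤ n ∧ n ∉ Γ ∧ x = n} := by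
  obtain ⟨Λ, hΛ, w, hw0, hint, hlog, hspan⟩ := sparse_gamma_not_complete_general
    (fun n ↦ ψ ‖(n : ℝ)‖) (hψ0.comp (tendsto_norm_comp_cofinite_atTop_of_isClosedEmbedding
      Int.isClosedEmbedding_coe_real))
  refine ⟨{γ | 1 ≤ γ ∧ (γ : ℤ) ∈ Λ}, by simp, ?_, w, hw0, hint, hlog, mt (ExpSpans.mono ?_) hspan⟩
  · have hinj : Function.Injective fun γ : {γ : ℕ | 1 ≤ γ ∧ (γ : ℤ) ∈ Λ} ↦ (⟨γ, γ.2.2⟩ : Λ) :=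
      fun a b hab ↦ by simpa [Subtype.ext_iff] using hab
    simpa [Function.comp_def] using hΛ.comp_injective hinj
  · rintro _ ⟨n, hn, hnΛ, rfl⟩
    exact ⟨n, fun h ↦ hnΛ ⟨hn, h⟩, by simp⟩
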